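/- arXiv:2107.03805 — 2 statements merged into one kernel-verified Lean document; each statement's English description precedes it below -/
import Mathlib

section
/- (Pentadiagonal case: the Szegő function is a quadratic polynomial.) Let q₁, q₂ ∈ ℂ and let φ(t) = 1 + 2 Re(q₁ e^{2πit}) + 2 Re(q₂ e^{4πit}) for t ∈ [0,1]. Assume φ(t) > 0 for all t ∈ [0,1]. Set c₀ = exp((1/2)∫₀¹ log φ(t) dt) and assume c₀⁴ ≠ |q₂|². Then for all |z| < 1, exp((1/2)∫₀¹ ((e^{2πit}+z)/(e^{2πit}−z)) log φ(t) dt) = c₀ + c₁ z + c₂ z², where c₁ = c₀ (c₀² q₁ − q₂ conj(q₁)) / (c₀⁴ − |q₂|²) and c₂ = q₂ / c₀. -/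
open MeasureTheory Complex Filter ComplexConjugate

/-- The point `e^{2πit}` on the unit circle. -/
noncomputable def circlePt (t : ℝ) : ℂ := Complex.exp (((2 * Real.pi * t : ℝ) : ℂ) * Complex.I)

/-- The inverse Szegő function `ψ(z) = exp(-(1/2)∫₀¹ ((e^{2πit}+z)/(e^{2πit}-z)) log φ(t) dt)`. -/
noncomputable def szegoPsi (φ : ℝ → ℝ) (z : ℂ) : ℂ :=
  Complex.exp (-(1/2 : ℂ) * ∫ t in (0:ℝ)..1,
    ((circlePt t + z) / (circlePt t - z)) * (Real.log (φ t) : ℂ))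

/-- Fourier coefficients of the weight: `γ(k) = ∫₀¹ e^{2πikt} φ(t) dt`. -/
noncomputable def toeplitzCoeff (φ : ℝ → ℝ) (k : ℤ) : ℂ :=
  ∫ t in (0:ℝ)..1, Complex.exp (((2 * Real.pi * (k : ℝ) * t : ℝ) : ℂ) * Complex.I) * (φ t : ℂ)

theorem norm_circlePt (t : ℝ) : ‖circlePt t‖ = 1 := Complex.norm_exp_ofReal_mul_I _

theorem integral_comp_circlePt (g : ℂ → ℂ) :
    ∫ t in (0:ℝ)..1, g (circlePt t) = Real.circleAverage g 0 1 := by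
  have h := intervalIntegral.integral_comp_mul_left (a := 0) (b := 1)
    (fun θ : ℝ => g (circleMap 0 1 θ)) (c := 2 * Real.pi) (by positivity)
  rw [mul_zero, mul_one] at h
  rw [Real.circleAverage_def, ← h]
  simp [circlePt, circleMap]

/-- **Schwarz integral formula** on the unit disc. -/
theorem schwarz_integral_formula {f : ℂ → ℂ} (hf : DifferentiableOn ℂ f (Metric.closedBall 0 1))
    (hf₀ : conj (f 0) = f 0) {z : ℂ} (hz : ‖z‖ < 1) :
    Real.circleAverage (fun w => (w + z) / (w - z) * (f w + conj (f w))) 0 1 = 2 * f z := by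
  have hne : ∀ w ∈ Metric.sphere (0 : ℂ) 1, w - z ≠ 0 := by
    intro w hw h
    rw [mem_sphere_zero_iff_norm, sub_eq_zero.1 h] at hw
    exact hz.ne hw
  have hne' : ∀ w ∈ Metric.closedBall (0 : ℂ) 1, 1 - conj z * w ≠ 0 := by
    intro w hw h
    have h1 : ‖conj z * w‖ = 1 := by rw [← sub_eq_zero.1 h, norm_one]
    rw [norm_mul, RCLike.norm_conj] at h1
    have := mem_closedBall_zero_iff.1 hw
    nlinarith [norm_nonneg z, norm_nonneg w]
  have hcl : closure (Metric.ball (0 : ℂ) |1|) = Metric.closedBall 0 1 := by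
    rw [abs_one, closure_ball _ one_ne_zero]
  have hfd : DiffContOnCl ℂ f (Metric.ball 0 |1|) := by
    apply DifferentiableOn.diffContOnCl; rwa [hcl]
  have hgd : DifferentiableOn ℂ (fun w => (1 + conj z * w) / (1 - conj z * w) * f w)
      (Metric.closedBall 0 1) :=
    (DifferentiableOn.div (by fun_prop) (by fun_prop) hne').mul hf
  have hfc : ContinuousOn f (Metric.sphere 0 1) :=
    hf.continuousOn.mono Metric.sphere_subset_closedBall
  have hgc := hgd.continuousOn.mono (Metric.sphere_subset_closedBall (x := (0 : ℂ)) (ε := 1))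
  have hkc : ContinuousOn (fun w => ((w - 0) / (w - z)) • f w) (Metric.sphere 0 1) :=
    (ContinuousOn.div (by fun_prop) (by fun_prop) hne).smul hfc
  have key : Set.EqOn (fun w => (w + z) / (w - z) * (f w + conj (f w)))
      (fun w => ((2 : ℂ) * ((w - 0) / (w - z)) • f w - f w) +
        conj ((1 + conj z * w) / (1 - conj z * w) * f w)) (Metric.sphere 0 |1|) := by
    intro w hw
    rw [abs_one] at hw
    have h1 := hne w hw
    have h2 := hne' w (Metric.sphere_subset_closedBall hw)
    have hw0 : w ≠ 0 := by rintro rfl; simp at hw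
    have hww : w * conj w = 1 := by
      rw [Complex.mul_conj', mem_sphere_zero_iff_norm.1 hw]; simp
    have h3 : 1 - z * conj w ≠ 0 := by
      intro h; apply h2; have := congrArg conj h; simpa using this
    have h4 : (1 + z * conj w) / (1 - z * conj w) = (w + z) / (w - z) := by
      rw [div_eq_div_iff h3 h1]; linear_combination (2 * z) * hww
    simp only [map_mul, map_div₀, map_add, map_sub, map_one, Complex.conj_conj, h4, smul_eq_mul,
      sub_zero]
    field_simp
    ring
  have i1 : CircleIntegrable f 0 1 := hfc.circleIntegrable zero_le_one
  have i3 := hgc.circleIntegrable zero_le_one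
  have i4 : CircleIntegrable (fun w => (2 : ℂ) * ((w - 0) / (w - z)) • f w) 0 1 :=
    (hkc.const_smul (2 : ℂ)).circleIntegrable zero_le_one
  have i5 : CircleIntegrable (fun w => conj ((1 + conj z * w) / (1 - conj z * w) * f w)) 0 1 :=
    (Complex.continuous_conj.comp_continuousOn hgc).circleIntegrable zero_le_one
  have i6 : CircleIntegrable (fun w => (2 : ℂ) * ((w - 0) / (w - z)) • f w - f w) 0 1 := i4.sub i1
  have e1 := hfd.circleAverage
  have e2 := hfd.circleAverage_smul_div (w := z) (by simpa using hz)
  have e3 : Real.circleAverage (fun w => conj ((1 + conj z * w) / (1 - conj z * w) * f w)) 0 1 =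
      conj (f 0) := by
    have h := (Complex.conjCLE : ℂ →L[ℝ] ℂ).circleAverage_comp_comm i3
    have h' := DiffContOnCl.circleAverage (f := fun w => (1 + conj z * w) / (1 - conj z * w) * f w)
      (c := 0) (R := 1) (by apply DifferentiableOn.diffContOnCl; rwa [hcl])
    rw [h'] at h
    simpa [Function.comp_def] using h
  have e4 : Real.circleAverage (fun w => (2 : ℂ) * ((w - 0) / (w - z)) • f w) 0 1 = 2 * f z := by
    rw [← e2]; exact Real.circleAverage_fun_smul (a := (2 : ℂ))
  rw [Real.circleAverage_congr_sphere key, Real.circleAverage_fun_add i6 i5,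
    Real.circleAverage_fun_sub i4 i1, e1, e3, e4, hf₀]
  ring

theorem exists_root_norm_lt_one {q₁ q₂ : ℂ} (hq₂ : q₂ ≠ 0)
    (hpos : ∀ w : ℂ, ‖w‖ = 1 → 0 < 1 + 2 * (q₁ * w).re + 2 * (q₂ * w ^ 2).re) :
    ∃ α : ℂ, α ≠ 0 ∧ ‖α‖ < 1 ∧
      q₂ + q₁ * α + α ^ 2 + conj q₁ * α ^ 3 + conj q₂ * α ^ 4 = 0 := by
  obtain ⟨r, hr⟩ : ∃ r : ℂ, q₂ + q₁ * r + r ^ 2 + conj q₁ * r ^ 3 + conj q₂ * r ^ 4 = 0 := by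
    open Polynomial in
    obtain ⟨r, hr⟩ := IsAlgClosed.exists_root
      (C q₂ + C q₁ * X + X ^ 2 + C (conj q₁) * X ^ 3 + C (conj q₂) * X ^ 4 : ℂ[X]) (by
        have hd : (C q₂ + C q₁ * X + X ^ 2 + C (conj q₁) * X ^ 3 + C (conj q₂) * X ^ 4 :
            ℂ[X]).degree = 4 := by
          compute_degree!
        rw [hd]; decide)
    exact ⟨r, by simpa [IsRoot] using hr⟩
  have hr0 : r ≠ 0 := by rintro rfl; simp at hr; exact hq₂ hr
  rcases lt_trichotomy ‖r‖ 1 with h | h | h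
  · exact ⟨r, hr0, h, hr⟩
  · exfalso
    have hrr : r * conj r = 1 := by rw [Complex.mul_conj', h]; simp
    have hp := hpos (conj r) (by rw [RCLike.norm_conj, h])
    have e : ((1 + 2 * (q₁ * conj r).re + 2 * (q₂ * conj r ^ 2).re : ℝ) : ℂ) = 0 := by
      push_cast
      rw [Complex.re_eq_add_conj, Complex.re_eq_add_conj]
      simp only [map_mul, map_pow, Complex.conj_conj]
      generalize conj r = b at *
      have : b ^ 2 * (q₂ + q₁ * r + r ^ 2 + conj q₁ * r ^ 3 + conj q₂ * r ^ 4) = 0 := by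
        rw [hr, mul_zero]
      linear_combination this - (q₁ * b + (1 + r * b) * (1 + conj q₁ * r + conj q₂ * r ^ 2)) * hrr
    rw [Complex.ofReal_eq_zero] at e
    exact hp.ne' e
  · have hc0 : conj r ≠ 0 := by simpa using hr0
    refine ⟨(conj r)⁻¹, inv_ne_zero hc0, ?_, ?_⟩
    · rw [norm_inv, RCLike.norm_conj]; exact inv_lt_one_of_one_lt₀ h
    · have := congrArg conj hr
      simp only [map_add, map_mul, map_pow, Complex.conj_conj, map_zero] at this
      field_simp
      linear_combination this

/-- A root inside the disc splits off a factor `|1 - α w|²` from a trigonometric polynomial of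
degree two. -/
theorem exists_splitting {q₁ q₂ : ℂ}
    (hpos : ∀ w : ℂ, ‖w‖ = 1 → 0 < 1 + 2 * (q₁ * w).re + 2 * (q₂ * w ^ 2).re) :
    ∃ (α h : ℂ) (k : ℝ), ‖α‖ < 1 ∧ q₂ = -(α * h) ∧ q₁ = (1 + α * conj α) * h - α * k ∧
      (1 + α * conj α) * k - conj α * h - α * conj h = 1 := by
  by_cases hq₂ : q₂ = 0
  · exact ⟨0, q₁, 1, by simp [hq₂]⟩
  obtain ⟨α, hα0, hα, E⟩ := exists_root_norm_lt_one hq₂ hpos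
  have hb0 : conj α ≠ 0 := by simpa using hα0
  have E' := congrArg conj E
  simp only [map_add, map_mul, map_pow, Complex.conj_conj, map_zero] at E'
  have hs : 1 - α * conj α ≠ 0 := by
    rw [Complex.mul_conj']
    norm_cast
    nlinarith [norm_nonneg α]
  have hreal : conj (-((1 + α * conj α) * q₂ + α * q₁) / α ^ 2) =
      -((1 + α * conj α) * q₂ + α * q₁) / α ^ 2 := by
    simp only [map_div₀, map_neg, map_add, map_mul, map_pow, Complex.conj_conj, map_one]
    rw [div_eq_div_iff (pow_ne_zero 2 hb0) (pow_ne_zero 2 hα0)]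
    apply mul_left_cancel₀ hs
    linear_combination conj α ^ 2 * E - α ^ 2 * E'
  obtain ⟨k, hk⟩ := Complex.conj_eq_iff_real.1 hreal
  refine ⟨α, -(q₂ / α), k, hα, by field_simp, ?_, ?_⟩
  · rw [← hk]; field_simp; ring
  · rw [← hk]
    simp only [map_neg, map_div₀]
    field_simp
    apply mul_left_cancel₀ hs
    linear_combination (-conj α) * E + α ^ 3 * E'

/-- Fejér–Riesz factorization in degree one. -/
theorem exists_splitting_degree_one {h : ℂ} {k : ℝ}
    (hpos : ∀ w : ℂ, ‖w‖ = 1 → 0 < k + 2 * (h * w).re) :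
    ∃ (A : ℝ) (β : ℂ), 0 < A ∧ ‖β‖ < 1 ∧ h = -(β * A) ∧ k = A * (1 + ‖β‖ ^ 2) := by
  have hk : 2 * ‖h‖ < k := by
    by_cases h0 : h = 0
    · have := hpos 1 (by simp)
      simpa [h0] using this
    · have hn : ‖h‖ ≠ 0 := by simpa using h0
      have := hpos (-(conj h / ‖h‖)) (by simp [hn])
      have e : h * (-(conj h / ‖h‖)) = ((-‖h‖ : ℝ) : ℂ) := by
        have hn' : (‖h‖ : ℂ) ≠ 0 := by exact_mod_cast hn
        push_cast
        field_simp
        rw [Complex.mul_conj']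
      rw [e, Complex.ofReal_re] at this
      linarith
  have hn := norm_nonneg h
  set d := Real.sqrt (k ^ 2 - 4 * ‖h‖ ^ 2)
  have hd2 : d ^ 2 = k ^ 2 - 4 * ‖h‖ ^ 2 := Real.sq_sqrt (by nlinarith)
  have hd0 : 0 ≤ d := Real.sqrt_nonneg _
  set A := (k + d) / 2 with hA
  have hA0 : 0 < A := by linarith
  have hAc : (A : ℂ) ≠ 0 := by exact_mod_cast hA0.ne'
  have hnβ : ‖-(h / (A : ℂ))‖ = ‖h‖ / A := by
    rw [norm_neg, norm_div, Complex.norm_real, Real.norm_of_nonneg hA0.le]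
  refine ⟨A, -(h / A), hA0, ?_, by field_simp, ?_⟩
  · rw [hnβ, div_lt_one hA0]; linarith
  · rw [hnβ]
    field_simp
    rw [hA]
    linear_combination (-1 / 4 : ℝ) * hd2

theorem one_sub_mul_re_pos {α z : ℂ} (hα : ‖α‖ < 1) (hz : ‖z‖ ≤ 1) : 0 < (1 - α * z).re := by
  have h1 : (α * z).re ≤ ‖α * z‖ := Complex.re_le_norm _
  rw [norm_mul] at h1
  rw [Complex.sub_re, Complex.one_re]
  nlinarith [norm_nonneg α, norm_nonneg z]

theorem log_add_conj_log (u : ℂ) :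
    Complex.log u + conj (Complex.log u) = ((2 * Real.log ‖u‖ : ℝ) : ℂ) := by
  rw [Complex.add_conj, Complex.log_re]

theorem exists_circlePt_eq {w : ℂ} (hw : ‖w‖ = 1) : ∃ t ∈ Set.Icc (0 : ℝ) 1, circlePt t = w := by
  have hpi := Real.pi_pos
  refine ⟨toIcoMod Real.two_pi_pos 0 w.arg / (2 * Real.pi), ?_, ?_⟩
  · have := toIcoMod_mem_Ico Real.two_pi_pos 0 w.arg
    rw [zero_add] at this
    exact ⟨div_nonneg this.1 (by positivity), (div_le_one (by positivity)).2 this.2.le⟩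
  · have e : 2 * Real.pi * (toIcoMod Real.two_pi_pos 0 w.arg / (2 * Real.pi)) =
        w.arg - toIcoDiv Real.two_pi_pos 0 w.arg * (2 * Real.pi) := by
      rw [mul_div_cancel₀ _ (by positivity), toIcoMod, zsmul_eq_mul]
    rw [circlePt, e]
    have h2 := Complex.norm_mul_exp_arg_mul_I w
    rw [hw, Complex.ofReal_one, one_mul] at h2
    conv_rhs => rw [← h2]
    rw [Complex.exp_eq_exp_iff_exists_int]
    refine ⟨-toIcoDiv Real.two_pi_pos 0 w.arg, ?_⟩
    push_cast
    ring

/-- A positive trigonometric polynomial of degree two with constant coefficient one is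
`A |1 - α w|² |1 - β w|²` on the unit circle, with `α`, `β` in the open unit disc. -/
theorem exists_fejer_riesz_degree_two {q₁ q₂ : ℂ}
    (hpos : ∀ w : ℂ, ‖w‖ = 1 → 0 < 1 + 2 * (q₁ * w).re + 2 * (q₂ * w ^ 2).re) :
    ∃ (A : ℝ) (α β : ℂ), 0 < A ∧ ‖α‖ < 1 ∧ ‖β‖ < 1 ∧ q₂ = A * (α * β) ∧
      q₁ = -A * (α * (1 + β * conj β) + β * (1 + α * conj α)) ∧
      ∀ w : ℂ, ‖w‖ = 1 → 1 + 2 * (q₁ * w).re + 2 * (q₂ * w ^ 2).re =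
        A * ‖1 - α * w‖ ^ 2 * ‖1 - β * w‖ ^ 2 := by
  obtain ⟨α, h, k, hα, h2, h1, h0⟩ := exists_splitting hpos
  have hfac : ∀ w : ℂ, ‖w‖ = 1 → 1 + 2 * (q₁ * w).re + 2 * (q₂ * w ^ 2).re =
      ‖1 - α * w‖ ^ 2 * (k + 2 * (h * w).re) := by
    intro w hw
    have hww : w * conj w = 1 := by rw [Complex.mul_conj', hw]; simp
    apply Complex.ofReal_injective
    push_cast
    rw [← Complex.mul_conj' (1 - α * w), Complex.re_eq_add_conj, Complex.re_eq_add_conj,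
      Complex.re_eq_add_conj, h2, h1]
    simp only [map_mul, map_pow, map_sub, map_add, map_neg, map_one, Complex.conj_conj,
      Complex.conj_ofReal]
    generalize conj w = v at *
    linear_combination (-1 : ℂ) * h0 +
      (α * conj h + conj α * h - α * conj α * (k + h * w + conj h * v)) * hww
  have hpos' : ∀ w : ℂ, ‖w‖ = 1 → 0 < k + 2 * (h * w).re := by
    intro w hw
    have := hpos w hw
    rw [hfac w hw] at this
    exact pos_of_mul_pos_right this (by positivity)
  obtain ⟨A, β, hA, hβ, rfl, rfl⟩ := exists_splitting_degree_one hpos'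
  refine ⟨A, α, β, hA, hα, hβ, by rw [h2]; ring, ?_, fun w hw => ?_⟩
  · rw [h1, Complex.mul_conj' β]; push_cast; ring
  · have hww : w * conj w = 1 := by rw [Complex.mul_conj', hw]; simp
    rw [hfac w hw]
    apply Complex.ofReal_injective
    push_cast
    rw [← Complex.mul_conj' (1 - β * w), ← Complex.mul_conj' β, Complex.re_eq_add_conj]
    simp only [map_mul, map_sub, map_neg, map_one, Complex.conj_ofReal]
    linear_combination (-(‖1 - α * w‖ : ℂ) ^ 2 * A * β * conj β) * hww

/-- pentadiagonal case: for a strictly positive weight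
`φ(t) = 1 + 2 Re(q₁ e^{2πit}) + 2 Re(q₂ e^{4πit})` with `c₀ = exp((1/2)∫₀¹ log φ)` and
`c₀⁴ ≠ |q₂|²`, the Szegő function is the quadratic polynomial `c₀ + c₁ z + c₂ z²` with
`c₁ = c₀ (c₀² q₁ − q₂ conj(q₁))/(c₀⁴ − |q₂|²)` and `c₂ = q₂/c₀`. -/
theorem szego_function_pentadiagonal (q₁ q₂ : ℂ) (φ : ℝ → ℝ)
    (hφ : ∀ t : ℝ, φ t = 1 + 2 * (q₁ * circlePt t).re + 2 * (q₂ * circlePt t ^ 2).re)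
    (hpos : ∀ t ∈ Set.Icc (0:ℝ) 1, 0 < φ t)
    (c₀ : ℝ) (hc₀ : c₀ = Real.exp ((1/2) * ∫ t in (0:ℝ)..1, Real.log (φ t)))
    (hne : c₀ ^ 4 ≠ ‖q₂‖ ^ 2) :
    ∀ z : ℂ, ‖z‖ < 1 →
      Complex.exp ((1/2 : ℂ) * ∫ t in (0:ℝ)..1,
          ((circlePt t + z) / (circlePt t - z)) * (Real.log (φ t) : ℂ)) =
        (c₀ : ℂ) +
          ((c₀ : ℂ) * ((c₀ : ℂ) ^ 2 * q₁ - q₂ * conj q₁) /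
            ((c₀ : ℂ) ^ 4 - (‖q₂‖ : ℂ) ^ 2)) * z +
          (q₂ / (c₀ : ℂ)) * z ^ 2 := by
  have hpos' : ∀ w : ℂ, ‖w‖ = 1 → 0 < 1 + 2 * (q₁ * w).re + 2 * (q₂ * w ^ 2).re := by
    intro w hw
    obtain ⟨t, ht, rfl⟩ := exists_circlePt_eq hw
    rw [← hφ]
    exact hpos t ht
  obtain ⟨A, α, β, hA, hα, hβ, h2, h1, hfac⟩ := exists_fejer_riesz_degree_two hpos'
  set f : ℂ → ℂ := fun z =>
    ((Real.log A / 2 : ℝ) : ℂ) + Complex.log (1 - α * z) + Complex.log (1 - β * z) with hf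
  have hfd : DifferentiableOn ℂ f (Metric.closedBall 0 1) := by
    have hlog : ∀ γ : ℂ, ‖γ‖ < 1 →
        DifferentiableOn ℂ (fun z => Complex.log (1 - γ * z)) (Metric.closedBall 0 1) :=
      fun γ hγ => DifferentiableOn.clog (by fun_prop) fun z hz =>
        Or.inl (one_sub_mul_re_pos hγ (mem_closedBall_zero_iff.1 hz))
    exact ((differentiableOn_const _).add (hlog α hα)).add (hlog β hβ)
  have hf0 : f 0 = ((Real.log A / 2 : ℝ) : ℂ) := by simp [hf]
  have hne0 : ∀ γ z : ℂ, ‖γ‖ < 1 → ‖z‖ ≤ 1 → 1 - γ * z ≠ 0 := by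
    intro γ z hγ hz h
    have := one_sub_mul_re_pos hγ hz
    simp [h] at this
  have hlogφ : ∀ t : ℝ, (Real.log (φ t) : ℂ) = f (circlePt t) + conj (f (circlePt t)) := by
    intro t
    have hw := norm_circlePt t
    have ha := norm_ne_zero_iff.2 (hne0 α _ hα hw.le)
    have hb := norm_ne_zero_iff.2 (hne0 β _ hβ hw.le)
    have ea := log_add_conj_log (1 - α * circlePt t)
    have eb := log_add_conj_log (1 - β * circlePt t)
    rw [hφ, hfac _ hw, Real.log_mul (by positivity) (by positivity),
      Real.log_mul (by positivity) (by positivity), Real.log_pow, Real.log_pow]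
    simp only [hf, map_add, Complex.conj_ofReal]
    push_cast at ea eb ⊢
    linear_combination -ea - eb
  have hS : ∀ z : ℂ, ‖z‖ < 1 → ∫ t in (0:ℝ)..1,
      ((circlePt t + z) / (circlePt t - z)) * (Real.log (φ t) : ℂ) = 2 * f z := by
    intro z hz
    simp only [hlogφ]
    rw [← schwarz_integral_formula hfd (by rw [hf0, Complex.conj_ofReal]) hz]
    exact integral_comp_circlePt fun w => (w + z) / (w - z) * (f w + conj (f w))
  have hint : ∫ t in (0:ℝ)..1, Real.log (φ t) = Real.log A := by
    have h := hS 0 (by simp)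
    have hw : ∀ t, circlePt t ≠ 0 := fun t => Complex.exp_ne_zero _
    simp only [add_zero, sub_zero, div_self (hw _), one_mul, hf0,
      intervalIntegral.integral_ofReal] at h
    apply Complex.ofReal_injective
    rw [h]
    push_cast
    ring
  have hc0 : c₀ = Real.exp (Real.log A / 2) := by rw [hc₀, hint]; congr 1; ring
  have hc0pos : 0 < c₀ := hc0 ▸ Real.exp_pos _
  have hcA : A = c₀ ^ 2 := by
    rw [hc0, ← Real.exp_nat_mul]
    push_cast
    rw [mul_div_cancel₀ _ two_ne_zero, Real.exp_log hA]
  have hc0c : (c₀ : ℂ) ≠ 0 := by exact_mod_cast hc0pos.ne'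
  intro z hz
  have hexp : Complex.exp (f z) = c₀ * (1 - α * z) * (1 - β * z) := by
    rw [hf, Complex.exp_add, Complex.exp_add, Complex.exp_log (hne0 α z hα hz.le),
      Complex.exp_log (hne0 β z hβ hz.le), hc0, Complex.ofReal_exp]
  rw [hS z hz, show (1 / 2 : ℂ) * (2 * f z) = f z by ring, hexp]
  have hden : (c₀ : ℂ) ^ 4 - (‖q₂‖ : ℂ) ^ 2 ≠ 0 := by
    rw [sub_ne_zero]; exact_mod_cast hne
  have hc1 : (c₀ : ℂ) * ((c₀ : ℂ) ^ 2 * q₁ - q₂ * conj q₁) /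
      ((c₀ : ℂ) ^ 4 - (‖q₂‖ : ℂ) ^ 2) = -(c₀ * (α + β)) := by
    rw [div_eq_iff hden, ← Complex.mul_conj', h2, h1, hcA]
    simp only [map_mul, map_add, map_neg, map_one, Complex.conj_conj, Complex.conj_ofReal]
    push_cast
    ring
  have hc2 : q₂ / (c₀ : ℂ) = c₀ * (α * β) := by
    rw [div_eq_iff hc0c, h2, hcA]; push_cast; ring
  rw [hc1, hc2]
  ring
end

section
/- (Spectral density of fractional Gaussian noise.) Let H ∈ (0,1), H ≠ 1/2, and set C(H) = −ζ(−2H)/(2ζ(1+2H)), where ζ is the Riemann zeta function (understood via analytic continuation). Define φ_H(t) = 4 C(H) sin²(πt) (ζ(2H+1, t) + ζ(2H+1, 1−t)) for 0 < t < 1, where ζ(s, x) is the Hurwitz zeta function. Then for every integer k, ∫₀¹ e^{2πikt} φ_H(t) dt = (1/2)|k+1|^{2H} + (1/2)|k−1|^{2H} − |k|^{2H}. In particular ∫₀¹ φ_H(t) dt = 1 and φ_H is the spectral density of the covariance sequence of fractional Gaussian noise with Hurst index H. -/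
open MeasureTheory Complex Filter ComplexConjugate

/-- Hurwitz zeta function `ζ(s, x) = Σ_{n=0}^∞ (n + x)^{−s}` (convergent for s > 1, x ∈ (0,1]). -/
noncomputable def hurwitzZetaSum (s x : ℝ) : ℝ := ∑' n : ℕ, ((n : ℝ) + x) ^ (-s)

theorem lintegral_ofReal_eq_of_integral_eq {α : Type*} [MeasurableSpace α] {μ : Measure α}
    {f : α → ℝ} {c : ℝ} (hf : 0 ≤ᵐ[μ] f) (hc : c ≠ 0) (h : ∫ x, f x ∂μ = c) :
    ∫⁻ x, ENNReal.ofReal (f x) ∂μ = ENNReal.ofReal c := by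
  rw [← h, ofReal_integral_eq_lintegral_ofReal (.of_integral_ne_zero (h ▸ hc)) hf]

theorem lintegral_rpow_mul_exp_neg_mul_Ioi {a t : ℝ} (ha : 0 < a) (ht : 0 < t) :
    ∫⁻ s in Set.Ioi (0:ℝ), ENNReal.ofReal (s ^ (a - 1) * Real.exp (-(t * s))) =
      ENNReal.ofReal (t ^ (-a) * Real.Gamma a) := by
  refine lintegral_ofReal_eq_of_integral_eq ?_ (by positivity) ?_
  · filter_upwards [self_mem_ae_restrict measurableSet_Ioi] with s (hs : 0 < s)
    simp only [Pi.zero_apply]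
    positivity
  · rw [Real.integral_rpow_mul_exp_neg_mul_Ioi ha ht, one_div, Real.inv_rpow ht.le,
      Real.rpow_neg ht.le]

theorem lintegral_rpow_mul_exp_neg_mul_sq {a v : ℝ} (ha : 0 < a) (hv : 0 < v) :
    ∫⁻ s in Set.Ioi (0:ℝ), ENNReal.ofReal (s ^ (2 * a - 1) * Real.exp (-(v * s ^ 2))) =
      ENNReal.ofReal (v ^ (-a) * (Real.Gamma a / 2)) := by
  refine lintegral_ofReal_eq_of_integral_eq ?_ (by positivity) ?_
  · filter_upwards [self_mem_ae_restrict measurableSet_Ioi] with s (hs : 0 < s)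
    simp only [Pi.zero_apply]
    positivity
  · have := integral_rpow_mul_exp_neg_mul_rpow (p := 2) (q := 2 * a - 1) two_pos (by linarith) hv
    simp only [Real.rpow_two, neg_mul] at this
    rw [this]
    rw [show -(2 * a - 1 + 1) / 2 = -a by ring, show (2 * a - 1 + 1) / 2 = a by ring]
    ring

theorem integral_one_sub_cos_mul_exp_neg_mul {x s : ℝ} (hs : 0 < s) :
    ∫ t in Set.Ioi (0:ℝ), (1 - Real.cos (x * t)) * Real.exp (-(s * t)) =
      x ^ 2 / (s * (s ^ 2 + x ^ 2)) := by
  have h₁ : ((-s : ℝ) : ℂ).re < 0 := by simpa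
  have h₂ : (-s + x * I : ℂ).re < 0 := by simpa
  have hi := (integrableOn_exp_mul_complex_Ioi h₁ 0).sub (integrableOn_exp_mul_complex_Ioi h₂ 0)
  have hre := integral_re hi
  calc
    _ = ∫ t in Set.Ioi (0:ℝ), RCLike.re
        (((fun t : ℝ => Complex.exp (((-s : ℝ) : ℂ) * t)) -
          fun t : ℝ => Complex.exp ((-s + x * I : ℂ) * t)) t) := by
      refine integral_congr_ae (.of_forall fun t => ?_)
      simp [Complex.exp_re]
      ring
    _ = _ := by
      rw [hre]
      simp only [Pi.sub_apply]
      rw [integral_sub (integrableOn_exp_mul_complex_Ioi h₁ 0)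
        (integrableOn_exp_mul_complex_Ioi h₂ 0), integral_exp_mul_complex_Ioi h₁,
        integral_exp_mul_complex_Ioi h₂]
      simp [Complex.div_re, Complex.normSq_apply]
      have : s * s + x * x ≠ 0 := by nlinarith [mul_pos hs hs, mul_self_nonneg x]
      have : s ^ 2 + x ^ 2 ≠ 0 := by positivity
      field_simp
      ring

theorem lintegral_one_sub_cos_mul_rpow {a x : ℝ} (ha : a ∈ Set.Ioo (0:ℝ) 1) (hx : 0 < x) :
    ∫⁻ t in Set.Ioi (0:ℝ), ENNReal.ofReal
        ((1 - Real.cos (x * t)) * (t ^ (-(2 * a + 1)) * Real.Gamma (2 * a + 1))) =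
      ENNReal.ofReal (x ^ (2 * a) * (Real.Gamma a * Real.Gamma (1 - a) / 2)) := by
  obtain ⟨ha0, ha1⟩ := ha
  have hcos (t : ℝ) : 0 ≤ 1 - Real.cos (x * t) := sub_nonneg.2 (Real.cos_le_one _)
  calc
    _ = ∫⁻ t in Set.Ioi (0:ℝ), ∫⁻ s in Set.Ioi (0:ℝ), ENNReal.ofReal
          ((1 - Real.cos (x * t)) * (s ^ (2 * a + 1 - 1) * Real.exp (-(t * s)))) := by
      refine setLIntegral_congr_fun measurableSet_Ioi fun t (ht : 0 < t) => ?_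
      simp_rw [ENNReal.ofReal_mul (hcos t)]
      rw [lintegral_const_mul _ (by fun_prop),
        lintegral_rpow_mul_exp_neg_mul_Ioi (by linarith) ht]
    _ = ∫⁻ s in Set.Ioi (0:ℝ), ∫⁻ t in Set.Ioi (0:ℝ), ENNReal.ofReal
          ((1 - Real.cos (x * t)) * (s ^ (2 * a + 1 - 1) * Real.exp (-(t * s)))) :=
      lintegral_lintegral_swap (by fun_prop)
    _ = ∫⁻ s in Set.Ioi (0:ℝ), ∫⁻ v in Set.Ioi (0:ℝ), ENNReal.ofReal
          (x ^ 2 * Real.exp (-(v * x ^ 2)) *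
            (s ^ (2 * a - 1) * Real.exp (-(v * s ^ 2)))) := by
      refine setLIntegral_congr_fun measurableSet_Ioi fun s (hs : 0 < s) => ?_
      have h₁ := lintegral_ofReal_eq_of_integral_eq
        (.of_forall fun t => mul_nonneg (hcos t) (Real.exp_nonneg _)) (by positivity)
        (integral_one_sub_cos_mul_exp_neg_mul (x := x) hs)
      have h₂ := lintegral_rpow_mul_exp_neg_mul_Ioi one_pos
        (show 0 < s ^ 2 + x ^ 2 by positivity)
      have e₁ (t : ℝ) : ENNReal.ofReal ((1 - Real.cos (x * t)) *
          (s ^ (2 * a + 1 - 1) * Real.exp (-(t * s)))) =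
          ENNReal.ofReal (s ^ (2 * a)) *
            ENNReal.ofReal ((1 - Real.cos (x * t)) * Real.exp (-(s * t))) := by
        rw [← ENNReal.ofReal_mul (by positivity), add_sub_cancel_right, mul_comm t s]
        congr 1
        ring
      have e₂ (v : ℝ) : ENNReal.ofReal (x ^ 2 * Real.exp (-(v * x ^ 2)) *
            (s ^ (2 * a - 1) * Real.exp (-(v * s ^ 2)))) =
          ENNReal.ofReal (x ^ 2 * s ^ (2 * a - 1)) *
            ENNReal.ofReal (v ^ ((1:ℝ) - 1) * Real.exp (-((s ^ 2 + x ^ 2) * v))) := by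
        rw [← ENNReal.ofReal_mul (by positivity), sub_self, Real.rpow_zero, one_mul,
          show -((s ^ 2 + x ^ 2) * v) = -(v * x ^ 2) + -(v * s ^ 2) by ring, Real.exp_add]
        congr 1
        ring
      simp_rw [e₁, e₂]
      rw [lintegral_const_mul _ (by fun_prop), lintegral_const_mul _ (by fun_prop), h₁, h₂,
        ← ENNReal.ofReal_mul (by positivity), ← ENNReal.ofReal_mul (by positivity),
        Real.rpow_sub_one hs.ne', Real.rpow_neg_one, Real.Gamma_one]
      congr 1
      field_simp
    _ = ∫⁻ v in Set.Ioi (0:ℝ), ∫⁻ s in Set.Ioi (0:ℝ), ENNReal.ofReal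
          (x ^ 2 * Real.exp (-(v * x ^ 2)) *
            (s ^ (2 * a - 1) * Real.exp (-(v * s ^ 2)))) :=
      lintegral_lintegral_swap (by fun_prop)
    _ = ∫⁻ v in Set.Ioi (0:ℝ), ENNReal.ofReal (x ^ 2 * (Real.Gamma a / 2)) *
          ENNReal.ofReal (v ^ ((1 - a) - 1) * Real.exp (-(x ^ 2 * v))) := by
      refine setLIntegral_congr_fun measurableSet_Ioi fun v (hv : 0 < v) => ?_
      have hp : 0 ≤ x ^ 2 * Real.exp (-(v * x ^ 2)) := by positivity
      simp_rw [ENNReal.ofReal_mul hp]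
      rw [lintegral_const_mul _ (by fun_prop), lintegral_rpow_mul_exp_neg_mul_sq ha0 hv,
        ← ENNReal.ofReal_mul hp, ← ENNReal.ofReal_mul (by positivity),
        show 1 - a - 1 = -a by ring, mul_comm v]
      congr 1
      ring
    _ = _ := by
      rw [lintegral_const_mul _ (by fun_prop),
        lintegral_rpow_mul_exp_neg_mul_Ioi (by linarith) (by positivity),
        ← ENNReal.ofReal_mul (by positivity)]
      have : x ^ (2 * a) = x ^ 2 * (x ^ 2) ^ (-(1 - a)) := by
        rw [← Real.rpow_natCast x 2, ← Real.rpow_mul hx.le, ← Real.rpow_add hx]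
        congr 1
        push_cast
        ring
      rw [this]
      congr 1
      ring

theorem integrableOn_and_integral_one_sub_cos_mul_rpow {a : ℝ} (ha : a ∈ Set.Ioo (0:ℝ) 1)
    (x : ℝ) :
    IntegrableOn (fun t : ℝ => (1 - Real.cos (x * t)) * t ^ (-(2 * a + 1))) (Set.Ioi 0) ∧
    ∫ t in Set.Ioi (0:ℝ), (1 - Real.cos (x * t)) * t ^ (-(2 * a + 1)) =
      |x| ^ (2 * a) * (Real.pi / (2 * Real.sin (Real.pi * a) * Real.Gamma (2 * a + 1))) := by
  rcases eq_or_ne x 0 with rfl | hx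
  · have : 2 * a ≠ 0 := by linarith [ha.1]
    simp [this, Real.zero_rpow]
  have hG : 0 < Real.Gamma (2 * a + 1) := Real.Gamma_pos_of_pos (by linarith [ha.1])
  have key := lintegral_one_sub_cos_mul_rpow ha (abs_pos.2 hx)
  have hcos (t : ℝ) : Real.cos (|x| * t) = Real.cos (x * t) := by
    rcases abs_choice x with h | h <;> simp [h]
  simp_rw [hcos, ← mul_assoc] at key
  have hm : AEStronglyMeasurable (fun t : ℝ => (1 - Real.cos (x * t)) * t ^ (-(2 * a + 1)) *
      Real.Gamma (2 * a + 1)) (volume.restrict (Set.Ioi 0)) :=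
    Measurable.aestronglyMeasurable (by fun_prop)
  have hnn : 0 ≤ᵐ[volume.restrict (Set.Ioi 0)] fun t : ℝ =>
      (1 - Real.cos (x * t)) * t ^ (-(2 * a + 1)) * Real.Gamma (2 * a + 1) := by
    filter_upwards [self_mem_ae_restrict measurableSet_Ioi] with t (ht : 0 < t)
    have := sub_nonneg.2 (Real.cos_le_one (x * t))
    simp only [Pi.zero_apply]
    positivity
  have hint := (lintegral_ofReal_ne_top_iff_integrable hm hnn).1 (by rw [key]; simp)
  have hval := integral_eq_lintegral_of_nonneg_ae hnn hm
  have hG1 := Real.Gamma_pos_of_pos ha.1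
  have hG2 := Real.Gamma_pos_of_pos (sub_pos.2 ha.2)
  rw [key, ENNReal.toReal_ofReal (by positivity), integral_mul_const,
    Real.Gamma_mul_Gamma_one_sub] at hval
  refine ⟨?_, ?_⟩
  · have := hint.mul_const (Real.Gamma (2 * a + 1))⁻¹
    simp only [mul_inv_cancel_right₀ hG.ne'] at this
    exact this
  · rw [eq_div_of_mul_eq hG.ne' hval]
    have : Real.sin (Real.pi * a) ≠ 0 :=
      (Real.sin_pos_of_pos_of_lt_pi (mul_pos Real.pi_pos ha.1)
        (by nlinarith [ha.2, Real.pi_pos])).ne'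
    field_simp

theorem hasSum_integral_nat_add {E : Type*} [NormedAddCommGroup E] [NormedSpace ℝ E] {f : ℝ → E}
    (hf : IntegrableOn f (Set.Ioi 0)) :
    HasSum (fun n : ℕ => ∫ t in (0:ℝ)..1, f (n + t)) (∫ t in Set.Ioi (0:ℝ), f t) := by
  have hU : ⋃ n : ℕ, Set.Ioc (n : ℝ) ((Order.succ n : ℕ) : ℝ) = Set.Ioi 0 := by
    have := iUnion_Ioc_map_succ_eq_Ioi (f := fun n : ℕ => (n : ℝ)) (by simp)
      (by
        rintro ⟨b, hb⟩
        obtain ⟨n, hn⟩ := exists_nat_gt b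
        exact hn.not_ge (hb ⟨n, rfl⟩))
    simpa using this
  have := hasSum_integral_iUnion (μ := volume) (f := f)
    (s := fun n : ℕ => Set.Ioc (n : ℝ) ((Order.succ n : ℕ) : ℝ)) (fun _ => measurableSet_Ioc)
    Nat.mono_cast.pairwise_disjoint_on_Ioc_succ (by rwa [hU])
  rw [hU] at this
  simp only [← intervalIntegral.integral_of_le (Nat.mono_cast (Order.le_succ _))] at this
  simpa only [intervalIntegral.integral_comp_add_left, add_zero, Nat.succ_eq_succ,
    Nat.cast_succ] using this

theorem summable_nat_add_rpow_neg {s x : ℝ} (hs : 1 < s) (hx : 0 ≤ x) :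
    Summable fun n : ℕ => ((n : ℝ) + x) ^ (-s) := by
  refine ((Real.summable_one_div_nat_add_rpow x s).2 hs).congr fun n => ?_
  have : 0 ≤ (n : ℝ) + x := by positivity
  rw [abs_of_nonneg this, Real.rpow_neg this, one_div]

theorem hurwitzZetaSum_add_hurwitzZetaSum_one_sub {s t : ℝ} (hs : 1 < s)
    (ht : t ∈ Set.Icc (0:ℝ) 1) :
    hurwitzZetaSum s t + hurwitzZetaSum s (1 - t) =
      ∑' n : ℕ, (((n : ℝ) + t) ^ (-s) + ((n : ℝ) + (1 - t)) ^ (-s)) :=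
  ((summable_nat_add_rpow_neg hs ht.1).tsum_add
    (summable_nat_add_rpow_neg hs (sub_nonneg.2 ht.2))).symm

theorem intervalIntegrable_nat_add {f : ℝ → ℂ} (hf : IntegrableOn f (Set.Ioi 0)) (n : ℕ) :
    IntervalIntegrable (fun t => f (n + t)) volume 0 1 := by
  have h : IntervalIntegrable f volume (n : ℝ) (n + 1) := by
    rw [intervalIntegrable_iff_integrableOn_Ioc_of_le (by linarith)]
    exact hf.mono_set fun t ht => lt_of_le_of_lt n.cast_nonneg ht.1
  simpa using h.comp_add_left (n : ℝ)

theorem integral_periodic_mul_hurwitzZetaSum {w : ℝ → ℂ} {s : ℝ} (hs : 1 < s)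
    (hw : Function.Periodic w 1)
    (hi : IntegrableOn (fun t : ℝ => w t * ((t ^ (-s) : ℝ) : ℂ)) (Set.Ioi 0))
    (hi' : IntegrableOn (fun t : ℝ => w (-t) * ((t ^ (-s) : ℝ) : ℂ)) (Set.Ioi 0)) :
    ∫ t in (0:ℝ)..1, w t * ((hurwitzZetaSum s t + hurwitzZetaSum s (1 - t) : ℝ) : ℂ) =
      ∫ t in Set.Ioi (0:ℝ), (w t + w (-t)) * ((t ^ (-s) : ℝ) : ℂ) := by
  have hw' : Function.Periodic (fun t => w (-t)) 1 := fun t => by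
    change w (-(t + 1)) = w (-t)
    rw [neg_add, ← sub_eq_add_neg, hw.sub_eq]
  have hwn (n : ℕ) (t : ℝ) : w (n + t) = w t := by
    simpa [add_comm] using hw.nat_mul n t
  have hwn' (n : ℕ) (t : ℝ) : w (-(n + t)) = w (-t) := by
    simpa [add_comm] using hw'.nat_mul n t
  have i₁ (n : ℕ) : IntervalIntegrable
      (fun t : ℝ => w t * (((n + t : ℝ) ^ (-s) : ℝ) : ℂ)) volume 0 1 := by
    simpa only [hwn] using intervalIntegrable_nat_add hi n
  have i₂ (n : ℕ) : IntervalIntegrable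
      (fun t : ℝ => w (-t) * (((n + t : ℝ) ^ (-s) : ℝ) : ℂ)) volume 0 1 := by
    simpa only [hwn'] using intervalIntegrable_nat_add hi' n
  have hw1 (t : ℝ) : w (-(1 - t)) = w t := by
    rw [neg_sub]; exact hw.sub_eq t
  have i₃ (n : ℕ) : IntervalIntegrable
      (fun t : ℝ => w t * (((n + (1 - t) : ℝ) ^ (-s) : ℝ) : ℂ)) volume 0 1 := by
    simpa only [hw1, sub_self, sub_zero] using ((i₂ n).comp_sub_left 1).symm
  have e₃ (n : ℕ) : ∫ t in (0:ℝ)..1, w t * (((n + (1 - t) : ℝ) ^ (-s) : ℝ) : ℂ) =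
      ∫ t in (0:ℝ)..1, w (-t) * (((n + t : ℝ) ^ (-s) : ℝ) : ℂ) := by
    simpa only [hw1, sub_self, sub_zero] using intervalIntegral.integral_comp_sub_left
      (fun t : ℝ => w (-t) * (((n + t : ℝ) ^ (-s) : ℝ) : ℂ)) (1 : ℝ) (a := 0) (b := 1)
  set F : ℕ → ℝ → ℂ := fun n t =>
    w t * (((n + t : ℝ) ^ (-s) : ℝ) : ℂ) + w t * (((n + (1 - t) : ℝ) ^ (-s) : ℝ) : ℂ) with hF
  have hFi (n : ℕ) : IntervalIntegrable (F n) volume 0 1 := (i₁ n).add (i₃ n)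
  have s₁ : Summable fun n : ℕ => ∫ t in (0:ℝ)..1, ‖w t * (((n + t : ℝ) ^ (-s) : ℝ) : ℂ)‖ := by
    simpa only [hwn] using (hasSum_integral_nat_add hi.norm).summable
  have s₂ : Summable fun n : ℕ =>
      ∫ t in (0:ℝ)..1, ‖w t * (((n + (1 - t) : ℝ) ^ (-s) : ℝ) : ℂ)‖ := by
    have := (hasSum_integral_nat_add hi'.norm).summable
    simp only [hwn'] at this
    refine this.congr fun n => ?_
    simpa only [hw1, sub_self, sub_zero] using (intervalIntegral.integral_comp_sub_left
      (fun t : ℝ => ‖w (-t) * (((n + t : ℝ) ^ (-s) : ℝ) : ℂ)‖) (1 : ℝ) (a := 0) (b := 1)).symm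
  have sF : Summable fun n : ℕ => ∫ t in (0:ℝ)..1, ‖F n t‖ := by
    refine (s₁.add s₂).of_nonneg_of_le
      (fun n => intervalIntegral.integral_nonneg zero_le_one fun _ _ => norm_nonneg _) fun n => ?_
    rw [← intervalIntegral.integral_add (i₁ n).norm (i₃ n).norm]
    exact intervalIntegral.integral_mono_on zero_le_one (hFi n).norm
      ((i₁ n).norm.add (i₃ n).norm) fun t _ => norm_add_le _ _
  simp only [intervalIntegral.integral_of_le zero_le_one] at sF
  have hsum := hasSum_integral_of_summable_integral_norm (fun n => (hFi n).1) sF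
  have hfin := (hasSum_integral_nat_add hi).add (hasSum_integral_nat_add hi')
  rw [← integral_add hi hi'] at hfin
  simp only [hwn, hwn'] at hfin
  have hF' (n : ℕ) : ∫ t in Set.Ioc (0:ℝ) 1, F n t =
      (∫ t in (0:ℝ)..1, w t * (((n + t : ℝ) ^ (-s) : ℝ) : ℂ)) +
        ∫ t in (0:ℝ)..1, w (-t) * (((n + t : ℝ) ^ (-s) : ℝ) : ℂ) := by
    rw [← intervalIntegral.integral_of_le zero_le_one, ← e₃,
      ← intervalIntegral.integral_add (i₁ n) (i₃ n)]
  simp only [hF'] at hsum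
  simp_rw [add_mul]
  rw [← hsum.unique hfin, intervalIntegral.integral_of_le zero_le_one]
  refine setIntegral_congr_fun measurableSet_Ioc fun t ht => ?_
  simp only [hF, hurwitzZetaSum_add_hurwitzZetaSum_one_sub hs ⟨ht.1.le, ht.2⟩, ← mul_add,
    ← Complex.ofReal_add, tsum_mul_left, Complex.ofReal_tsum]
theorem riemannZeta_neg_div_riemannZeta {a : ℝ} (ha : 0 < a) :
    -riemannZeta (-(2 * (a : ℂ))) / (2 * riemannZeta (1 + 2 * (a : ℂ))) =
      (((2 * Real.pi) ^ (-(2 * a + 1)) * Real.Gamma (2 * a + 1) *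
        Real.sin (Real.pi * a) : ℝ) : ℂ) := by
  have hz : riemannZeta (1 + 2 * (a : ℂ)) ≠ 0 :=
    riemannZeta_ne_zero_of_one_lt_re (by simpa using ha)
  have h := riemannZeta_one_sub (s := ((2 * a + 1 : ℝ) : ℂ)) (fun n h => by
    have : (2 * a + 1 : ℝ) = -n := by exact_mod_cast h
    linarith [n.cast_nonneg (α := ℝ)]) (by
    intro h
    have : (2 * a + 1 : ℝ) = 1 := by exact_mod_cast h
    linarith)
  have hs : Complex.cos (Real.pi * ((2 * a + 1 : ℝ) : ℂ) / 2) =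
      -((Real.sin (Real.pi * a) : ℝ) : ℂ) := by
    rw [Complex.ofReal_sin, ← Complex.cos_add_pi_div_two]
    congr 1
    push_cast
    ring
  have hp : (2 * (Real.pi : ℂ)) ^ (-((2 * a + 1 : ℝ) : ℂ)) =
      (((2 * Real.pi) ^ (-(2 * a + 1)) : ℝ) : ℂ) := by
    rw [Complex.ofReal_cpow (by positivity)]
    push_cast
    rfl
  rw [hs, hp, Complex.Gamma_ofReal,
    show (1 : ℂ) - ((2 * a + 1 : ℝ) : ℂ) = -(2 * a) by push_cast; ring,
    show ((2 * a + 1 : ℝ) : ℂ) = 1 + 2 * a by push_cast; ring] at h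
  rw [h, div_eq_iff (by simpa using hz)]
  push_cast
  ring

theorem periodic_exp_mul_sin_sq (k : ℤ) :
    Function.Periodic (fun t : ℝ => Complex.exp (((2 * Real.pi * (k : ℝ) * t : ℝ) : ℂ) *
      Complex.I) * ((4 * Real.sin (Real.pi * t) ^ 2 : ℝ) : ℂ)) 1 := fun t => by
  have h : ((2 * Real.pi * (k : ℝ) * (t + 1) : ℝ) : ℂ) * Complex.I =
      ((2 * Real.pi * (k : ℝ) * t : ℝ) : ℂ) * Complex.I + k * (2 * Real.pi * Complex.I) := by
    push_cast
    ring
  simp only [h, Complex.exp_add, Complex.exp_int_mul_two_pi_mul_I, mul_one]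
  rw [mul_add, mul_one, Real.sin_add_pi, neg_sq]

theorem integrableOn_exp_mul_sin_sq_mul_rpow {a : ℝ} (ha : a ∈ Set.Ioo (0:ℝ) 1) (k : ℤ) :
    IntegrableOn (fun t : ℝ => Complex.exp (((2 * Real.pi * (k : ℝ) * t : ℝ) : ℂ) * Complex.I) *
      ((4 * Real.sin (Real.pi * t) ^ 2 : ℝ) : ℂ) * ((t ^ (-(2 * a + 1)) : ℝ) : ℂ))
      (Set.Ioi 0) := by
  refine ((integrableOn_and_integral_one_sub_cos_mul_rpow ha (2 * Real.pi)).1.const_mul 2).mono'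
    (Measurable.aestronglyMeasurable (by fun_prop)) ?_
  filter_upwards [self_mem_ae_restrict measurableSet_Ioi] with t (ht : 0 < t)
  have h1 : 0 ≤ 4 * Real.sin (Real.pi * t) ^ 2 := by positivity
  have h2 : 0 ≤ t ^ (-(2 * a + 1)) := by positivity
  rw [norm_mul, norm_mul, Complex.norm_exp_ofReal_mul_I, Complex.norm_of_nonneg h1,
    Complex.norm_of_nonneg h2, mul_assoc 2 Real.pi, Real.cos_two_mul, Real.cos_sq']
  exact le_of_eq (by ring)

theorem integral_exp_mul_sin_sq_mul_rpow {a : ℝ} (ha : a ∈ Set.Ioo (0:ℝ) 1) (k : ℤ) :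
    ∫ t in Set.Ioi (0:ℝ),
      (Complex.exp (((2 * Real.pi * (k : ℝ) * t : ℝ) : ℂ) * Complex.I) *
          ((4 * Real.sin (Real.pi * t) ^ 2 : ℝ) : ℂ) +
        Complex.exp (((2 * Real.pi * (k : ℝ) * (-t) : ℝ) : ℂ) * Complex.I) *
          ((4 * Real.sin (Real.pi * (-t)) ^ 2 : ℝ) : ℂ)) * ((t ^ (-(2 * a + 1)) : ℝ) : ℂ) =
      ((2 * (2 * Real.pi) ^ (2 * a) *
        (|(k : ℝ) + 1| ^ (2 * a) + |(k : ℝ) - 1| ^ (2 * a) - 2 * |(k : ℝ)| ^ (2 * a)) *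
        (Real.pi / (2 * Real.sin (Real.pi * a) * Real.Gamma (2 * a + 1))) : ℝ) : ℂ) := by
  obtain ⟨i₁, e₁⟩ := integrableOn_and_integral_one_sub_cos_mul_rpow ha (2 * Real.pi * (k + 1))
  obtain ⟨i₂, e₂⟩ := integrableOn_and_integral_one_sub_cos_mul_rpow ha (2 * Real.pi * (k - 1))
  obtain ⟨i₃, e₃⟩ := integrableOn_and_integral_one_sub_cos_mul_rpow ha (2 * Real.pi * k)
  have habs (y : ℝ) : |2 * Real.pi * y| ^ (2 * a) = (2 * Real.pi) ^ (2 * a) * |y| ^ (2 * a) := by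
    rw [abs_mul, abs_of_pos Real.two_pi_pos, Real.mul_rpow (by positivity) (abs_nonneg _)]
  calc
    _ = ∫ t in Set.Ioi (0:ℝ), ((
        2 * ((1 - Real.cos (2 * Real.pi * (k + 1) * t)) * t ^ (-(2 * a + 1))) +
        2 * ((1 - Real.cos (2 * Real.pi * (k - 1) * t)) * t ^ (-(2 * a + 1))) -
        4 * ((1 - Real.cos (2 * Real.pi * k * t)) * t ^ (-(2 * a + 1))) : ℝ) : ℂ) := by
      refine integral_congr_ae (.of_forall fun t => ?_)
      have h : Complex.exp (((2 * Real.pi * (k : ℝ) * t : ℝ) : ℂ) * Complex.I) +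
          Complex.exp (((2 * Real.pi * (k : ℝ) * (-t) : ℝ) : ℂ) * Complex.I) =
          ((2 * Real.cos (2 * Real.pi * k * t) : ℝ) : ℂ) := by
        rw [mul_neg, Complex.ofReal_neg, Complex.ofReal_mul 2, Complex.ofReal_cos,
          Complex.ofReal_ofNat, Complex.two_cos]
      have hr : 2 * Real.cos (2 * Real.pi * k * t) * (4 * Real.sin (Real.pi * t) ^ 2) =
          2 * (1 - Real.cos (2 * Real.pi * (k + 1) * t)) +
          2 * (1 - Real.cos (2 * Real.pi * (k - 1) * t)) -
          4 * (1 - Real.cos (2 * Real.pi * k * t)) := by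
        rw [show 2 * Real.pi * (k + 1) * t = 2 * Real.pi * k * t + 2 * (Real.pi * t) by ring,
          show 2 * Real.pi * (k - 1) * t = 2 * Real.pi * k * t - 2 * (Real.pi * t) by ring,
          Real.cos_add, Real.cos_sub, Real.cos_two_mul, Real.cos_sq']
        ring
      simp only [mul_neg Real.pi, Real.sin_neg, neg_sq]
      rw [← add_mul, h, ← Complex.ofReal_mul, hr, ← Complex.ofReal_mul]
      congr 1
      ring
    _ = _ := by
      rw [integral_complex_ofReal, integral_sub ((i₁.const_mul 2).fun_add (i₂.const_mul 2))
        (i₃.const_mul 4), integral_add (i₁.const_mul 2) (i₂.const_mul 2), integral_const_mul, integral_const_mul,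
        integral_const_mul, e₁, e₂, e₃, habs, habs, habs]
      congr 1
      ring

/-- spectral density of fractional Gaussian noise: with
`C(H) = −ζ(−2H)/(2ζ(1+2H))` and
`φ_H(t) = 4 C(H) sin²(πt) (ζ(2H+1, t) + ζ(2H+1, 1−t))`, one has
`∫₀¹ e^{2πikt} φ_H(t) dt = (1/2)|k+1|^{2H} + (1/2)|k−1|^{2H} − |k|^{2H}` for every k ∈ ℤ;
in particular `∫₀¹ φ_H = 1`. -/
theorem fgn_spectral_density (H : ℝ) (hH : H ∈ Set.Ioo (0:ℝ) 1) (hH' : H ≠ 1/2)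
    (C : ℝ) (hC : (C : ℂ) = -riemannZeta (-(2 * (H : ℂ))) / (2 * riemannZeta (1 + 2 * (H : ℂ))))
    (φH : ℝ → ℝ)
    (hφH : ∀ t : ℝ, φH t = 4 * C * Real.sin (Real.pi * t) ^ 2 *
      (hurwitzZetaSum (2 * H + 1) t + hurwitzZetaSum (2 * H + 1) (1 - t))) :
    (∀ k : ℤ,
      ∫ t in (0:ℝ)..1,
          Complex.exp (((2 * Real.pi * (k : ℝ) * t : ℝ) : ℂ) * Complex.I) * (φH t : ℂ) =
        (((1/2) * |(k : ℝ) + 1| ^ (2 * H) + (1/2) * |(k : ℝ) - 1| ^ (2 * H)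
            - |(k : ℝ)| ^ (2 * H) : ℝ) : ℂ)) ∧
    ∫ t in (0:ℝ)..1, φH t = 1 := by
  have hs : 1 < 2 * H + 1 := by linarith [hH.1]
  rw [riemannZeta_neg_div_riemannZeta hH.1] at hC
  replace hC := Complex.ofReal_injective hC
  have main (k : ℤ) : ∫ t in (0:ℝ)..1,
      Complex.exp (((2 * Real.pi * (k : ℝ) * t : ℝ) : ℂ) * Complex.I) * (φH t : ℂ) =
        (((1/2) * |(k : ℝ) + 1| ^ (2 * H) + (1/2) * |(k : ℝ) - 1| ^ (2 * H)
            - |(k : ℝ)| ^ (2 * H) : ℝ) : ℂ) := by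
    have hk := integral_periodic_mul_hurwitzZetaSum hs (periodic_exp_mul_sin_sq k)
      (integrableOn_exp_mul_sin_sq_mul_rpow hH k) (by
        refine (integrableOn_exp_mul_sin_sq_mul_rpow hH (-k)).congr_fun (fun t _ => ?_)
          measurableSet_Ioi
        simp)
    rw [integral_exp_mul_sin_sq_mul_rpow hH] at hk
    calc
      _ = ∫ t in (0:ℝ)..1, (C : ℂ) *
          (Complex.exp (((2 * Real.pi * (k : ℝ) * t : ℝ) : ℂ) * Complex.I) *
            ((4 * Real.sin (Real.pi * t) ^ 2 : ℝ) : ℂ) *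
            ((hurwitzZetaSum (2 * H + 1) t + hurwitzZetaSum (2 * H + 1) (1 - t) : ℝ) : ℂ)) := by
        refine intervalIntegral.integral_congr fun t _ => ?_
        simp only [hφH]
        push_cast
        ring
      _ = _ := by
        rw [intervalIntegral.integral_const_mul, hk, ← Complex.ofReal_mul, hC]
        congr 1
        have h2 : (2 * Real.pi) ^ (2 * H) ≠ 0 := by positivity
        have hG : Real.Gamma (2 * H + 1) ≠ 0 := (Real.Gamma_pos_of_pos (by linarith)).ne'
        have hsin : Real.sin (Real.pi * H) ≠ 0 :=
          (Real.sin_pos_of_pos_of_lt_pi (mul_pos Real.pi_pos hH.1)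
            (by nlinarith [hH.2, Real.pi_pos])).ne'
        rw [Real.rpow_neg (by positivity), Real.rpow_add_one (by positivity)]
        field_simp
  refine ⟨main, Complex.ofReal_injective ?_⟩
  have h0 := main 0
  have : 2 * H ≠ 0 := by linarith [hH.1]
  rw [← intervalIntegral.integral_ofReal]
  simp [Real.zero_rpow this] at h0
  rw [h0]
  norm_num
end
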